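/- Let X ⊆ ℝⁿ be an open p-convex set and let f : X → ℝⁿ be a C¹ cooperative vector field. If γ, δ : [0,T] → X are solutions of the system ẋ = f(x) with γ(0) ≤ δ(0), then γ(t) ≤ δ(t) for every t ∈ [0,T]. -/

import Mathlib

open Set Filter Topology

noncomputable section

/-- `f` is a cooperative vector field on `X`: the off-diagonal entries of the
Jacobian are nonnegative. -/
def coopVF {n : ℕ} (f : (Fin n → ℝ) → (Fin n → ℝ)) (X : Set (Fin n → ℝ)) : Prop :=
  ∀ x ∈ X, ∀ i j : Fin n, i ≠ j → 0 ≤ fderiv ℝ f x (Pi.single j 1) i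

/-- The Jacobian matrix of `f` at `x`. -/
def jacMat {n : ℕ} (f : (Fin n → ℝ) → (Fin n → ℝ)) (x : Fin n → ℝ) :
    Fin n → Fin n → ℝ :=
  fun i j => fderiv ℝ f x (Pi.single j 1) i

/-- A matrix is irreducible if for every nonempty proper subset `S` of indices there
are `i ∈ S`, `j ∉ S` with `A i j ≠ 0`. -/
def matIrred {n : ℕ} (A : Fin n → Fin n → ℝ) : Prop :=
  ∀ S : Set (Fin n), S.Nonempty → S ≠ Set.univ → ∃ i ∈ S, ∃ j ∉ S, A i j ≠ 0

/-- `X` is p-convex: the segment joining any two order-related points of `X` lies in `X`. -/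
def pconvex {n : ℕ} (X : Set (Fin n → ℝ)) : Prop :=
  ∀ x ∈ X, ∀ y ∈ X, x < y → segment ℝ x y ⊆ X

/-- `x ≪ y`: strict inequality in every coordinate. -/
def strLt {n : ℕ} (x y : Fin n → ℝ) : Prop := ∀ i, x i < y i

/-- `γ` is a solution of `ẋ = f(x)` on the time interval `I`, with values in `X`. -/
def IsSolOn {n : ℕ} (f : (Fin n → ℝ) → (Fin n → ℝ)) (X : Set (Fin n → ℝ))
    (I : Set ℝ) (γ : ℝ → Fin n → ℝ) : Prop :=
  (∀ t ∈ I, γ t ∈ X) ∧ (∀ t ∈ I, HasDerivWithinAt γ (f (γ t)) I t)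

/-- The ω-limit set (within `X`) of a curve `γ`. -/
def omegaSet {n : ℕ} (X : Set (Fin n → ℝ)) (γ : ℝ → Fin n → ℝ) :
    Set (Fin n → ℝ) :=
  {y | y ∈ X ∧ ∃ t : ℕ → ℝ, Tendsto t atTop atTop ∧
    Tendsto (fun k => γ (t k)) atTop (𝓝 y)}

/-- The α-limit set (within `X`) of a curve `γ`. -/
def alphaSet {n : ℕ} (X : Set (Fin n → ℝ)) (γ : ℝ → Fin n → ℝ) :
    Set (Fin n → ℝ) :=
  {y | y ∈ X ∧ ∃ t : ℕ → ℝ, Tendsto t atTop atBot ∧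
    Tendsto (fun k => γ (t k)) atTop (𝓝 y)}

/-- The Euclidean norm on `Fin n → ℝ`. -/
def eunorm {n : ℕ} (v : Fin n → ℝ) : ℝ := Real.sqrt (∑ i, (v i) ^ 2)

/-- `X` is order-convex: it contains the order interval of any two of its points. -/
def orderConvex {n : ℕ} (X : Set (Fin n → ℝ)) : Prop :=
  ∀ x ∈ X, ∀ y ∈ X, x ≤ y → Set.Icc x y ⊆ X

/-!
Cooperativity and p-convexity give the Kamke condition: `f i` increases along ordered pairs of
points that agree in coordinate `i`, by the mean value theorem on the segment joining them. Now let
`γ` be a subsolution and `δ` a supersolution. At an index `i` with `δ i < γ i`, the point `γ ⊔ δ`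
lies above `γ` and agrees with it in coordinate `i`, so
`γ' i - δ' i ≤ f (γ ⊔ δ) i - f δ i ≤ K * ‖γ ⊔ δ - δ‖ = K * ‖(γ - δ)⁺‖`.
Hence the differentiable function `∑ i, ((γ - δ) i)⁺ ^ 2` satisfies a linear differential inequality
and vanishes by Grönwall. This needs `γ ⊔ δ` and `δ` to stay where `f` is `K`-Lipschitz, which holds
shortly after any time at which `γ ≤ δ`; continuous induction along the interval does the rest.
-/

open scoped NNReal

/-- The Kamke condition (type K) on `f`, under which `ẋ = f(x)` preserves the order: `f i` is
monotone in the coordinates other than the `i`-th, both points being required to lie in `X`. -/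
def QuasimonotoneOn {ι : Type*} (f : (ι → ℝ) → ι → ℝ) (X : Set (ι → ℝ)) : Prop :=
  ∀ ⦃x⦄, x ∈ X → ∀ ⦃y⦄, y ∈ X → x ≤ y → ∀ i, x i = y i → f x i ≤ f y i

section DifferentialInequality

variable {ι : Type*} {f : (ι → ℝ) → ι → ℝ} {X : Set (ι → ℝ)} {a b : ℝ} {γ δ : ℝ → ι → ℝ}

/-- A subsolution `γ' ≤ f(γ)` of `ẋ = f(x)` on `[a, b]`, in the sense of right derivatives; the
curve is only required to lie in `X` before the final time. -/
structure IsSubsolution (f : (ι → ℝ) → ι → ℝ) (X : Set (ι → ℝ)) (a b : ℝ) (γ : ℝ → ι → ℝ) :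
    Prop where
  continuousOn : ContinuousOn γ (Icc a b)
  mapsTo : MapsTo γ (Ico a b) X
  exists_deriv_le : ∀ t ∈ Ico a b, ∃ v ≤ f (γ t), HasDerivWithinAt γ v (Ici t) t

/-- A supersolution `f(δ) ≤ δ'` of `ẋ = f(x)` on `[a, b]`, in the sense of right derivatives; the
curve is only required to lie in `X` before the final time. -/
structure IsSupersolution (f : (ι → ℝ) → ι → ℝ) (X : Set (ι → ℝ)) (a b : ℝ) (δ : ℝ → ι → ℝ) :
    Prop where
  continuousOn : ContinuousOn δ (Icc a b)
  mapsTo : MapsTo δ (Ico a b) X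
  exists_le_deriv : ∀ t ∈ Ico a b, ∃ v, f (δ t) ≤ v ∧ HasDerivWithinAt δ v (Ici t) t

lemma IsSubsolution.mono {a' b' : ℝ} (hγ : IsSubsolution f X a b γ) (ha : a ≤ a') (hb : b' ≤ b) :
    IsSubsolution f X a' b' γ where
  continuousOn := hγ.continuousOn.mono (Icc_subset_Icc ha hb)
  mapsTo := hγ.mapsTo.mono_left (Ico_subset_Ico ha hb)
  exists_deriv_le t ht := hγ.exists_deriv_le t (Ico_subset_Ico ha hb ht)

lemma IsSupersolution.mono {a' b' : ℝ} (hδ : IsSupersolution f X a b δ) (ha : a ≤ a')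
    (hb : b' ≤ b) : IsSupersolution f X a' b' δ where
  continuousOn := hδ.continuousOn.mono (Icc_subset_Icc ha hb)
  mapsTo := hδ.mapsTo.mono_left (Ico_subset_Ico ha hb)
  exists_le_deriv t ht := hδ.exists_le_deriv t (Ico_subset_Ico ha hb ht)

end DifferentialInequality

lemma hasDerivAt_posPart_sq (x : ℝ) : HasDerivAt (fun y : ℝ => y⁺ ^ 2) (2 * x⁺) x := by
  have hcont : Continuous fun y : ℝ => y⁺ := by
    simpa only [posPart_def] using continuous_id'.sup continuous_const
  refine hasDerivAt_of_hasDerivAt_of_ne' (x := 0) (fun y hy => ?_)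
    (hcont.pow 2).continuousAt (hcont.const_mul 2).continuousAt x
  obtain hneg | hpos := hy.lt_or_gt
  · rw [posPart_of_nonpos hneg.le, mul_zero]
    refine (hasDerivAt_const y (0 : ℝ)).congr_of_eventuallyEq ?_
    filter_upwards [Iio_mem_nhds hneg] with z hz
    rw [Pi.pow_apply, posPart_of_nonpos (le_of_lt hz), zero_pow two_ne_zero]
  · rw [posPart_of_nonneg hpos.le]
    have hsq : HasDerivAt (fun z : ℝ => z ^ 2) (2 * y) y := by simpa using hasDerivAt_pow 2 y
    refine hsq.congr_of_eventuallyEq ?_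
    filter_upwards [Ioi_mem_nhds hpos] with z hz
    rw [Pi.pow_apply, posPart_of_nonneg (le_of_lt hz)]

section Comparison

variable {ι : Type*} [Fintype ι] {f : (ι → ℝ) → ι → ℝ} {X : Set (ι → ℝ)} {a b : ℝ}
  {γ δ : ℝ → ι → ℝ}

lemma norm_sq_le_sum_norm_sq {E : ι → Type*} [∀ i, SeminormedAddCommGroup (E i)]
    (v : ∀ i, E i) : ‖v‖ ^ 2 ≤ ∑ i, ‖v i‖ ^ 2 := by
  rw [← Real.le_sqrt (norm_nonneg v) (Finset.sum_nonneg fun i _ => sq_nonneg ‖v i‖),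
    pi_norm_le_iff_of_nonneg (Real.sqrt_nonneg _)]
  exact fun i => Real.le_sqrt_of_sq_le <|
    Finset.single_le_sum (fun j _ => sq_nonneg ‖v j‖) (Finset.mem_univ i)

lemma sum_two_mul_posPart_mul_le {w v : ι → ℝ} {K : ℝ} (hK : 0 ≤ K)
    (hv : ∀ i, 0 < w i → v i ≤ K * ‖w⁺‖) :
    ∑ i, 2 * (w i)⁺ * v i ≤ 2 * Fintype.card ι * K * ∑ i, (w i)⁺ ^ 2 := by
  have hcoord : ∀ i, (w i)⁺ ≤ ‖w⁺‖ := fun i => (le_abs_self _).trans (norm_le_pi_norm w⁺ i)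
  have hnorm : ‖w⁺‖ ^ 2 ≤ ∑ i, (w i)⁺ ^ 2 := by
    simpa only [Real.norm_eq_abs, sq_abs] using! norm_sq_le_sum_norm_sq w⁺
  have hterm : ∀ i, 2 * (w i)⁺ * v i ≤ 2 * K * ‖w⁺‖ ^ 2 := by
    intro i
    obtain hnonpos | hpos := le_or_gt (w i) 0
    · rw [posPart_of_nonpos hnonpos, mul_zero, zero_mul]
      positivity
    · calc 2 * (w i)⁺ * v i ≤ 2 * (w i)⁺ * (K * ‖w⁺‖) := by gcongr; exact hv i hpos
        _ ≤ 2 * ‖w⁺‖ * (K * ‖w⁺‖) := by gcongr; exact hcoord i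
        _ = 2 * K * ‖w⁺‖ ^ 2 := by ring
  calc ∑ i, 2 * (w i)⁺ * v i ≤ ∑ _i : ι, 2 * K * ‖w⁺‖ ^ 2 :=
        Finset.sum_le_sum fun i _ => hterm i
    _ = 2 * Fintype.card ι * K * ‖w⁺‖ ^ 2 := by
        rw [Finset.sum_const, Finset.card_univ, nsmul_eq_mul]; ring
    _ ≤ 2 * Fintype.card ι * K * ∑ i, (w i)⁺ ^ 2 := by gcongr

lemma nonpos_of_deriv_le_mul_norm_posPart {w : ℝ → ι → ℝ} {K : ℝ} (hK : 0 ≤ K)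
    (hw : ContinuousOn w (Icc a b))
    (hw' : ∀ t ∈ Ico a b, ∃ v, HasDerivWithinAt w v (Ici t) t ∧
      ∀ i, 0 < w t i → v i ≤ K * ‖(w t)⁺‖)
    (ha : w a ≤ 0) : ∀ t ∈ Icc a b, w t ≤ 0 := by
  choose! w' hderiv hbound using hw'
  have hderiv_sum : ∀ t ∈ Ico a b, HasDerivWithinAt (fun s => ∑ i, (w s i)⁺ ^ 2)
      (∑ i, 2 * (w t i)⁺ * w' t i) (Ici t) t := fun t ht =>
    HasDerivWithinAt.fun_sum fun i _ => HasDerivAt.comp_hasDerivWithinAt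
      (h₂ := fun y : ℝ => y⁺ ^ 2) t (hasDerivAt_posPart_sq (w t i))
      (hasDerivWithinAt_pi.1 (hderiv t ht) i)
  have hcont_sum : ContinuousOn (fun s => ∑ i, (w s i)⁺ ^ 2) (Icc a b) :=
    continuousOn_finsetSum _ fun i _ => Continuous.comp_continuousOn
      (continuous_iff_continuousAt.2 fun x => (hasDerivAt_posPart_sq x).continuousAt)
      (continuousOn_pi.1 hw i)
  have hinit : ∑ i, (w a i)⁺ ^ 2 ≤ 0 :=
    (Finset.sum_eq_zero fun i _ =>
      pow_eq_zero_iff two_ne_zero |>.2 (posPart_eq_zero.2 (ha i))).le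
  intro t ht i
  have hsum : ∑ j, (w t j)⁺ ^ 2 ≤ 0 := by
    have hgronwall := le_gronwallBound_of_liminf_deriv_right_le hcont_sum
      (fun s hs _ hr => (hderiv_sum s hs).liminf_right_slope_le hr) hinit
      (fun s hs => (sum_two_mul_posPart_mul_le hK (hbound s hs)).trans_eq (add_zero _).symm) t ht
    rwa [gronwallBound_ε0_δ0] at hgronwall
  have hi : (w t i)⁺ ^ 2 ≤ 0 :=
    (Finset.single_le_sum (f := fun j => (w t j)⁺ ^ 2) (fun j _ => sq_nonneg _)
      (Finset.mem_univ i)).trans hsum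
  exact posPart_eq_zero.1 (pow_eq_zero_iff two_ne_zero |>.1 (hi.antisymm (sq_nonneg _)))

lemma QuasimonotoneOn.apply_le_add_mul_norm_posPart {U : Set (ι → ℝ)}
    (hqm : QuasimonotoneOn f X) {K : ℝ≥0} (hf : LipschitzOnWith K f U) {x y : ι → ℝ}
    (hx : x ∈ X) (hsup : x ⊔ y ∈ X ∩ U) (hy : y ∈ U) {i : ι} (hi : y i ≤ x i) :
    f x i ≤ f y i + K * ‖(x - y)⁺‖ := by
  have hmono : f x i ≤ f (x ⊔ y) i := hqm hx hsup.1 le_sup_left i (sup_of_le_left hi).symm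
  have hdiff : x ⊔ y - y = (x - y)⁺ := by rw [sup_sub, sub_self, posPart_def]
  have hlip : f (x ⊔ y) i - f y i ≤ K * ‖(x - y)⁺‖ :=
    calc f (x ⊔ y) i - f y i ≤ ‖f (x ⊔ y) - f y‖ :=
          (le_abs_self _).trans (norm_le_pi_norm (f (x ⊔ y) - f y) i)
      _ ≤ K * ‖x ⊔ y - y‖ := hf.norm_sub_le hsup.2 hy
      _ = K * ‖(x - y)⁺‖ := by rw [hdiff]
  linarith

lemma QuasimonotoneOn.le_of_lipschitzOnWith (hqm : QuasimonotoneOn f X) {U : Set (ι → ℝ)}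
    {K : ℝ≥0} (hf : LipschitzOnWith K f U) (hγ : IsSubsolution f X a b γ)
    (hδ : IsSupersolution f U a b δ) (hsup : MapsTo (γ ⊔ δ) (Ico a b) (X ∩ U))
    (ha : γ a ≤ δ a) : ∀ t ∈ Icc a b, γ t ≤ δ t := by
  have hbound : ∀ t ∈ Ico a b, ∃ v, HasDerivWithinAt (γ - δ) v (Ici t) t ∧
      ∀ i, 0 < (γ - δ) t i → v i ≤ K * ‖((γ - δ) t)⁺‖ := by
    intro t ht
    obtain ⟨u, hu, hγ'⟩ := hγ.exists_deriv_le t ht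
    obtain ⟨v, hv, hδ'⟩ := hδ.exists_le_deriv t ht
    refine ⟨u - v, hγ'.sub hδ', fun i hi => ?_⟩
    calc u i - v i ≤ f (γ t) i - f (δ t) i := sub_le_sub (hu i) (hv i)
      _ ≤ K * ‖(γ t - δ t)⁺‖ := sub_le_iff_le_add'.2 <| hqm.apply_le_add_mul_norm_posPart hf
          (hγ.mapsTo ht) (hsup ht) (hδ.mapsTo ht) (sub_pos.1 hi).le
  exact fun t ht => sub_nonpos.1 <| nonpos_of_deriv_le_mul_norm_posPart K.coe_nonneg
    (hγ.continuousOn.sub hδ.continuousOn) hbound (sub_nonpos.2 ha) t ht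

lemma QuasimonotoneOn.eventually_le (hqm : QuasimonotoneOn f X) (hX : IsOpen X)
    (hf : LocallyLipschitzOn X f) (hab : a < b) (hγ : IsSubsolution f X a b γ)
    (hδ : IsSupersolution f X a b δ) (ha : γ a ≤ δ a) : ∀ᶠ t in 𝓝[>] a, γ t ≤ δ t := by
  have hδa : δ a ∈ X := hδ.mapsTo (left_mem_Ico.2 hab)
  obtain ⟨K, U, hU, hfU⟩ := hf hδa
  have hXU : X ∩ U ∈ 𝓝 (δ a) := by
    rw [hX.nhdsWithin_eq hδa] at hU
    exact inter_mem (hX.mem_nhds hδa) hU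
  have hright : 𝓝[Icc a b] a = 𝓝[≥] a := nhdsWithin_Icc_eq_nhdsGE hab
  have hγlim : Tendsto γ (𝓝[≥] a) (𝓝 (γ a)) :=
    hright ▸ hγ.continuousOn a (left_mem_Icc.2 hab.le)
  have hδlim : Tendsto δ (𝓝[≥] a) (𝓝 (δ a)) :=
    hright ▸ hδ.continuousOn a (left_mem_Icc.2 hab.le)
  have hsuplim : Tendsto (γ ⊔ δ) (𝓝[≥] a) (𝓝 (δ a)) := by
    rw [← sup_of_le_right ha]
    exact tendsto_pi_nhds.2 fun i => (hγlim.apply_nhds i).sup_nhds (hδlim.apply_nhds i)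
  obtain ⟨c, hac, hc⟩ := mem_nhdsGE_iff_exists_Icc_subset.1 <|
    inter_mem (inter_mem (hδlim hXU) (hsuplim hXU)) (Icc_mem_nhdsGE hab)
  have hcb : c ≤ b := (hc (right_mem_Icc.2 (le_of_lt hac))).2.2
  have hδU : IsSupersolution f U a c δ :=
    { hδ.mono le_rfl hcb with mapsTo := fun t ht => (hc (Ico_subset_Icc_self ht)).1.1.2 }
  exact mem_of_superset (Icc_mem_nhdsGT hac) <| hqm.le_of_lipschitzOnWith hfU
    (hγ.mono le_rfl hcb) hδU (fun t ht => (hc (Ico_subset_Icc_self ht)).1.2) ha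

theorem stmt_0_general (hX : IsOpen X) (hf : LocallyLipschitzOn X f) (hqm : QuasimonotoneOn f X)
    (hγ : IsSubsolution f X a b γ) (hδ : IsSupersolution f X a b δ) (ha : γ a ≤ δ a) :
    ∀ t ∈ Icc a b, γ t ≤ δ t := by
  have hclosed : IsClosed ({t | γ t ≤ δ t} ∩ Icc a b) := by
    rw [inter_comm]
    exact isClosed_Icc.isClosed_le hγ.continuousOn hδ.continuousOn
  exact hclosed.Icc_subset_of_forall_mem_nhdsWithin ha fun s hs =>
    hqm.eventually_le hX hf hs.2.2 (hγ.mono hs.2.1 le_rfl) (hδ.mono hs.2.1 le_rfl) hs.1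

end Comparison

lemma locallyLipschitzOn_of_contDiffOn {E F : Type*} [NormedAddCommGroup E] [NormedSpace ℝ E]
    [NormedAddCommGroup F] [NormedSpace ℝ F] {f : E → F} {X : Set E}
    (hX : IsOpen X) (hf : ContDiffOn ℝ 1 f X) : LocallyLipschitzOn X f := by
  intro x hx
  obtain ⟨K, U, hU, hfU⟩ := (hf.contDiffAt (hX.mem_nhds hx)).exists_lipschitzOnWith
  exact ⟨K, U, mem_nhdsWithin_of_mem_nhds hU, hfU⟩

lemma coopVF.fderiv_apply_nonneg {n : ℕ} {X : Set (Fin n → ℝ)}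
    {f : (Fin n → ℝ) → Fin n → ℝ} (hcoop : coopVF f X) {z v : Fin n → ℝ} (hz : z ∈ X)
    (hv : 0 ≤ v) {i : Fin n} (hvi : v i = 0) : 0 ≤ fderiv ℝ f z v i := by
  have hsum : fderiv ℝ f z v i = ∑ j, v j * fderiv ℝ f z (Pi.single j 1) i := by
    conv_lhs => rw [pi_eq_sum_univ' v]
    simp only [map_sum, map_smul, Finset.sum_apply, Pi.smul_apply, smul_eq_mul]
  rw [hsum]
  refine Finset.sum_nonneg fun j _ => ?_
  obtain rfl | hij := eq_or_ne i j
  · simp [hvi]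
  · exact mul_nonneg (hv j) (hcoop z hz i j hij)

lemma coopVF.quasimonotoneOn {n : ℕ} {X : Set (Fin n → ℝ)} {f : (Fin n → ℝ) → Fin n → ℝ}
    (hcoop : coopVF f X) (hX : IsOpen X) (hpc : pconvex X) (hf : DifferentiableOn ℝ f X) :
    QuasimonotoneOn f X := by
  intro x hx y hy hxy i hi
  obtain rfl | hlt := hxy.eq_or_lt
  · rfl
  have hseg : segment ℝ x y ⊆ X := hpc x hx y hy hlt
  have hderiv : ∀ z ∈ segment ℝ x y, HasFDerivWithinAt (fun u => f u i)
      ((ContinuousLinearMap.proj i).comp (fderiv ℝ f z)) (segment ℝ x y) z := fun z hz =>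
    (hasFDerivAt_pi'.1 (hf.differentiableAt (hX.mem_nhds (hseg hz))).hasFDerivAt
      i).hasFDerivWithinAt
  obtain ⟨z, hz, hmvt⟩ := domain_mvt hderiv (convex_segment x y)
    (left_mem_segment ℝ x y) (right_mem_segment ℝ x y)
  have hnonneg : 0 ≤ fderiv ℝ f z (y - x) i :=
    hcoop.fderiv_apply_nonneg (hseg hz) (sub_nonneg.2 hxy) (sub_eq_zero.2 hi.symm)
  exact sub_nonneg.1 (hmvt ▸ hnonneg)

section IsSolOn

variable {n : ℕ} {f : (Fin n → ℝ) → Fin n → ℝ} {X : Set (Fin n → ℝ)} {a b : ℝ}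
  {γ : ℝ → Fin n → ℝ}

lemma IsSolOn.continuousOn {I : Set ℝ} (hγ : IsSolOn f X I γ) : ContinuousOn γ I :=
  fun t ht => (hγ.2 t ht).continuousWithinAt

lemma IsSolOn.hasDerivWithinAt_Ici (hγ : IsSolOn f X (Icc a b) γ) {t : ℝ} (ht : t ∈ Ico a b) :
    HasDerivWithinAt γ (f (γ t)) (Ici t) t :=
  (hγ.2 t (Ico_subset_Icc_self ht)).mono_of_mem_nhdsWithin <|
    mem_of_superset (Icc_mem_nhdsGE ht.2) (Icc_subset_Icc_left ht.1)

lemma IsSolOn.isSubsolution (hγ : IsSolOn f X (Icc a b) γ) : IsSubsolution f X a b γ where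
  continuousOn := hγ.continuousOn
  mapsTo t ht := hγ.1 t (Ico_subset_Icc_self ht)
  exists_deriv_le _ ht := ⟨_, le_rfl, hγ.hasDerivWithinAt_Ici ht⟩

lemma IsSolOn.isSupersolution (hγ : IsSolOn f X (Icc a b) γ) : IsSupersolution f X a b γ where
  continuousOn := hγ.continuousOn
  mapsTo t ht := hγ.1 t (Ico_subset_Icc_self ht)
  exists_le_deriv _ ht := ⟨_, le_rfl, hγ.hasDerivWithinAt_Ici ht⟩

end IsSolOn

/-- monotonicity of cooperative systems (Müller–Kamke). -/
theorem stmt_0 {n : ℕ} {X : Set (Fin n → ℝ)} (hX : IsOpen X) (hpc : pconvex X)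
    {f : (Fin n → ℝ) → (Fin n → ℝ)} (hf : ContDiffOn ℝ 1 f X) (hcoop : coopVF f X)
    {T : ℝ} (hT : 0 ≤ T) {γ δ : ℝ → Fin n → ℝ}
    (hγ : IsSolOn f X (Set.Icc 0 T) γ) (hδ : IsSolOn f X (Set.Icc 0 T) δ)
    (h0 : γ 0 ≤ δ 0) :
    ∀ t ∈ Set.Icc (0 : ℝ) T, γ t ≤ δ t :=
  stmt_0_general hX (locallyLipschitzOn_of_contDiffOn hX hf)
    (hcoop.quasimonotoneOn hX hpc (hf.differentiableOn one_ne_zero))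
    hγ.isSubsolution hδ.isSupersolution h0
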